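/- Let G be a finite soluble group and let V be a non-central complemented chief factor of G. Then Σ_{k=0}^{∞} P*_{G,V}(k) ≤ min{ (δ_V + q_V/(q_V − 1))·q_V^{n_V} , (⌈δ_V/n_V⌉ + q_V^{n_V}/(q_V^{n_V} − 1))·|H_V| }. -/

import Mathlib

/-!
Definitions supporting the formalization of
"An upper bound on the Chebotarev invariant of a finite group" (Lucchini–Tracey).
-/

open scoped BigOperators

namespace ChebotarevPaper

/-- A `k`-tuple of elements of `G` invariably generates `G` if, replacing each entry by an
arbitrary conjugate, the resulting elements always generate `G`. -/
def InvGen (G : Type*) [Group G] {k : ℕ} (f : Fin k → G) : Prop :=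
  ∀ c : Fin k → G, Subgroup.closure (Set.range fun i => c i * f i * (c i)⁻¹) = ⊤

/-- The probability that `k` independent uniformly random elements of `G` invariably
generate `G`. -/
noncomputable def probInvGen (G : Type*) [Group G] (k : ℕ) : ℝ :=
  Nat.card {f : Fin k → G // InvGen G f} / (Nat.card G : ℝ) ^ k

/-- The Chebotarev invariant `C(G)`:  `C(G) = Σ_{k ≥ 0} (1 − P_I(G,k))`, where `P_I(G,k)`
is the probability that `k` independent uniformly random elements of `G` invariably
generate `G`. -/
noncomputable def cheb (G : Type*) [Group G] : ℝ :=
  ∑' k : ℕ, (1 - probInvGen G k)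

/-- The probability that `k` independent uniformly random elements of `G` generate `G`. -/
noncomputable def probGen (G : Type*) [Group G] (k : ℕ) : ℝ :=
  Nat.card {f : Fin k → G // Subgroup.closure (Set.range f) = ⊤} / (Nat.card G : ℝ) ^ k

/-- The expected number of uniformly random elements of `G` needed to generate `G`. -/
noncomputable def expectedGen (G : Type*) [Group G] : ℝ :=
  ∑' k : ℕ, (1 - probGen G k)

/-- `d(G)`: the minimal number of generators of `G`. -/
noncomputable def minGen (G : Type*) [Group G] : ℕ :=
  sInf {n | ∃ f : Fin n → G, Subgroup.closure (Set.range f) = ⊤}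

/-- `σ` has the defining property of the constant `σ = 2.118456563…` of Pomerance:
for every finite group `X`, the expected number of uniformly random elements needed to
generate `X` is at most `d(X) + σ`. -/
def IsPomeranceConst (σ : ℝ) : Prop :=
  ∀ (X : Type) [Group X] [Finite X], expectedGen X ≤ minGen X + σ

variable (G : Type*) [Group G]

/-- `(X, Y)` is a chief factor of `G`:  both are normal in `G`, `Y < X`, and no normal
subgroup of `G` lies strictly between them (i.e. `X/Y` is a minimal normal subgroup of
`G/Y`). -/
def IsChiefFactorPair (X Y : Subgroup G) : Prop :=
  X.Normal ∧ Y.Normal ∧ Y < X ∧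
    ∀ N : Subgroup G, N.Normal → Y ≤ N → N ≤ X → N = Y ∨ N = X

/-- The chief factor `X/Y` is complemented: there is `U ≤ G` with `UX = G` and
`U ⊓ X = Y`. -/
def IsComplementedFactor (X Y : Subgroup G) : Prop :=
  ∃ U : Subgroup G, U ⊔ X = ⊤ ∧ U ⊓ X = Y

/-- The chief factor `X/Y` is a Frattini chief factor, i.e. `X/Y ≤ Frat(G/Y)`;
equivalently (and this is how we state it), `X/Y` is abelian and has no complement
in `G`. -/
def IsFrattiniFactor (X Y : Subgroup G) : Prop :=
  (∀ a b : G, a ∈ X → b ∈ X → a * b * a⁻¹ * b⁻¹ ∈ Y) ∧ ¬ IsComplementedFactor G X Y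

/-- The chief factor `X/Y` is central in `G`, i.e. `X/Y ≤ Z(G/Y)`. -/
def IsCentralFactor (X Y : Subgroup G) : Prop :=
  ∀ g x : G, x ∈ X → g * x * g⁻¹ * x⁻¹ ∈ Y

/-- The `G`-group `V` (a group with an action `a : G →* MulAut V` of `G` by automorphisms)
is `G`-isomorphic to the chief factor `X/Y` (on which `G` acts by conjugation): there is a
surjective homomorphism `X →* V` with kernel `Y` transforming conjugation by `g ∈ G` into
the action of `g` on `V`. -/
def RepresentsFactor {V : Type*} [Group V] (a : G →* MulAut V) (X Y : Subgroup G) : Prop :=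
  ∃ f : X →* V, Function.Surjective f ∧ (∀ x : X, f x = 1 ↔ (x : G) ∈ Y) ∧
    ∀ (g : G) (x y : X), (y : G) = g * (x : G) * g⁻¹ → f y = a g (f x)

/-- Two `G`-groups `(V₁, a₁)`, `(V₂, a₂)` are `G`-equivalent: there are isomorphisms
`φ : V₁ ≃* V₂` and `Φ : V₁ ⋊ G ≃* V₂ ⋊ G` making the natural diagram of the two
extensions `1 → Vᵢ → Vᵢ ⋊ G → G → 1` commute. -/
def GEquiv {V₁ V₂ : Type*} [Group V₁] [Group V₂]
    (a₁ : G →* MulAut V₁) (a₂ : G →* MulAut V₂) : Prop :=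
  ∃ (φ : V₁ ≃* V₂) (Φ : (V₁ ⋊[a₁] G) ≃* (V₂ ⋊[a₂] G)),
    (∀ v : V₁, Φ (SemidirectProduct.inl v) = SemidirectProduct.inl (φ v)) ∧
    ∀ x, (Φ x).right = x.right

/-- `G`-isomorphism of `G`-groups. -/
def GIso {V₁ V₂ : Type*} [Group V₁] [Group V₂]
    (a₁ : G →* MulAut V₁) (a₂ : G →* MulAut V₂) : Prop :=
  ∃ φ : V₁ ≃* V₂, ∀ (g : G) (v : V₁), φ (a₁ g v) = a₂ g (φ v)

/-- `N` is a minimal normal subgroup of `G`. -/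
def IsMinimalNormal (N : Subgroup G) : Prop :=
  N.Normal ∧ N ≠ ⊥ ∧ ∀ M : Subgroup G, M.Normal → M ≠ ⊥ → M ≤ N → M = N

/-- The socle of `G`: the subgroup generated by all minimal normal subgroups of `G`. -/
def socle : Subgroup G := sSup {N : Subgroup G | IsMinimalNormal G N}

instance socle_normal : (socle G).Normal := by
  constructor
  intro n hn g
  have h : socle G ≤ (socle G).comap (MulAut.conj g).toMonoidHom := by
    rw [socle]
    apply sSup_le
    intro N hN x hx
    have h1 : (MulAut.conj g).toMonoidHom x ∈ N := by
      simpa [MulAut.conj_apply] using hN.1.conj_mem x hx g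
    exact Subgroup.mem_comap.2 (le_sSup hN h1)
  have h2 := h hn
  simpa [MulAut.conj_apply] using h2

/-- The action of `G` (by conjugation, through `f : G →* Q`) on the socle of `Q`. -/
def socAct {Q : Type*} [Group Q] (f : G →* Q) : G →* MulAut (socle Q) :=
  MulAut.conjNormal.comp f

/-- The diagonal action of `G` on `V × V` induced by an action on `V`. -/
def prodAct {V : Type*} [Group V] (a : G →* MulAut V) : G →* MulAut (V × V) where
  toFun g := MulEquiv.prodCongr (a g) (a g)
  map_one' := by
    ext x <;> simp [MulEquiv.prodCongr, MulAut.one_apply]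
  map_mul' g h := by
    ext x <;> simp [MulEquiv.prodCongr, MulAut.mul_apply]

/-- The diagonal action of `H` on `V^u` induced by an action on `V`. -/
def diagAct (H : Type*) [Group H] {V : Type*} [Group V] (b : H →* MulAut V) (u : ℕ) :
    H →* MulAut (Fin u → V) where
  toFun g := MulEquiv.piCongrRight fun _ => b g
  map_one' := by
    ext x i; simp
  map_mul' g h := by
    ext x i; simp [MulAut.mul_apply]

variable {G}

/-- The elements `gs 0, …, gs (k-1)` of `G` satisfy the `V`-property in `G`: they all lie
in the union of the `G`-conjugates of some maximal subgroup `M` of `G` such that the socle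
of `G/core_G(M)` is `G`-equivalent to `V` or to `V × V`. -/
def SatisfyVProperty {V : Type*} [Group V] (a : G →* MulAut V) {k : ℕ}
    (gs : Fin k → G) : Prop :=
  ∃ M : Subgroup G, IsCoatom M ∧
    (GEquiv G (socAct G (QuotientGroup.mk' M.normalCore)) a ∨
      GEquiv G (socAct G (QuotientGroup.mk' M.normalCore)) (prodAct G a)) ∧
    ∀ i, ∃ x : G, x * gs i * x⁻¹ ∈ M

/-- `P*_{G,V}(k)`: the probability that `k` independent uniformly random elements of `G`
satisfy the `V`-property in `G`. -/
noncomputable def pStar {V : Type*} [Group V] (a : G →* MulAut V) (k : ℕ) : ℝ :=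
  Nat.card {gs : Fin k → G // SatisfyVProperty a gs} / (Nat.card G : ℝ) ^ k

/-- The collection of normal subgroups `N` of `G` such that `G/N` is isomorphic to the
monolithic primitive group `L_V` associated to `V` (that is, `V ⋊ (G/C_G(V))` if `V` is
abelian and `G/C_G(V)` otherwise; here `C_G(V)` is the kernel of the action of `G` on
`V`) and the socle of `G/N` is `G`-equivalent to `V`. -/
def crownNormals {V : Type*} [Group V] (a : G →* MulAut V) : Set (Subgroup G) :=
  {N | ∃ _ : N.Normal,
    ((∀ x y : V, x * y = y * x) →
      Nonempty ((G ⧸ N) ≃* (V ⋊[QuotientGroup.kerLift a] (G ⧸ a.ker)))) ∧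
    (¬ (∀ x y : V, x * y = y * x) → Nonempty ((G ⧸ N) ≃* (G ⧸ a.ker))) ∧
    GEquiv G (socAct G (QuotientGroup.mk' N)) a}

/-- `R_G(V)`: the intersection of all normal subgroups `N` of `G` with `G/N ≅ L_V` and
`soc(G/N)` `G`-equivalent to `V`. -/
def crownRadical {V : Type*} [Group V] (a : G →* MulAut V) : Subgroup G :=
  sInf (crownNormals a)

instance crownRadical_normal {V : Type*} [Group V] (a : G →* MulAut V) :
    (crownRadical a).Normal := by
  constructor
  intro n hn g
  rw [crownRadical, Subgroup.mem_sInf] at hn ⊢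
  intro p hp
  obtain ⟨hpN, hrest⟩ := hp
  exact hpN.conj_mem n (hn p ⟨hpN, hrest⟩) g

/-- `I_G(V)`: the preimage in `G` of the socle of `G/R_G(V)`; the `V`-crown of `G` is
`I_G(V)/R_G(V)`. -/
def crownSocle {V : Type*} [Group V] (a : G →* MulAut V) : Subgroup G :=
  (socle (G ⧸ crownRadical a)).comap (QuotientGroup.mk' (crownRadical a))

/-- A chief series of `G`: a chain `⊥ = N_0 < N_1 < … < N_len = ⊤` of normal subgroups
of `G` in which each factor `N_{i+1}/N_i` is a chief factor of `G`. -/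
structure ChiefSeries (G : Type*) [Group G] where
  len : ℕ
  ser : Fin (len + 1) → Subgroup G
  bot_eq : ser 0 = ⊥
  top_eq : ser (Fin.last len) = ⊤
  chief : ∀ i : Fin len, IsChiefFactorPair G (ser i.succ) (ser i.castSucc)

/-- `δ_V(G)` (for a `G`-module `V`): the number of complemented factors in the chief
series `S` of `G` which are `G`-isomorphic to `V`. -/
noncomputable def deltaIso {V : Type*} [Group V] (a : G →* MulAut V)
    (S : ChiefSeries G) : ℕ :=
  Nat.card {i : Fin S.len //
    IsComplementedFactor G (S.ser i.succ) (S.ser i.castSucc) ∧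
    RepresentsFactor G a (S.ser i.succ) (S.ser i.castSucc)}

/-- The chief factor `X/Y` of `G` is `G`-equivalent to the `G`-group `(V, a)`. -/
def FactorGEquiv (X Y : Subgroup G) {V : Type*} [Group V] (a : G →* MulAut V) : Prop :=
  ∃ (W : Type) (_ : Group W) (b : G →* MulAut W),
    RepresentsFactor G b X Y ∧ GEquiv G b a

/-- `δ_V(G)` (for a `G`-group `V`): the number of non-Frattini factors in the chief
series `S` of `G` which are `G`-equivalent to `V`. -/
noncomputable def deltaEquiv {V : Type*} [Group V] (a : G →* MulAut V)
    (S : ChiefSeries G) : ℕ :=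
  Nat.card {i : Fin S.len //
    ¬ IsFrattiniFactor G (S.ser i.succ) (S.ser i.castSucc) ∧
    FactorGEquiv (S.ser i.succ) (S.ser i.castSucc) a}

/-- Bundled `G`-group: a group together with an action of `G` by automorphisms. -/
structure GGroup (G : Type) [Group G] : Type 1 where
  carrier : Type
  [grp : Group carrier]
  act : G →* MulAut carrier

attribute [instance] GGroup.grp

/-- The action `b` of `H` on `V` is irreducible: `V` is nontrivial and has no proper
nontrivial (normal) `H`-invariant subgroup. -/
def IsIrreducibleGGroup (H : Type*) [Group H] {V : Type*} [Group V]
    (b : H →* MulAut V) : Prop :=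
  Nontrivial V ∧
    ∀ W : Subgroup V, W.Normal → (∀ (h : H) (v : V), v ∈ W → b h v ∈ W) → W = ⊥ ∨ W = ⊤

/-- The `H`-equivariant endomorphisms of `V` (for `H`-modules `V` this is
`End_H(V)`). -/
def EquivEnd (H : Type*) [Group H] {V : Type*} [Group V] (b : H →* MulAut V) :=
  {f : V →* V // ∀ (h : H) (v : V), f (b h v) = b h (f v)}

/-- `q_V := |End_H(V)|`. -/
noncomputable def endCard (H : Type*) [Group H] {V : Type*} [Group V]
    (b : H →* MulAut V) : ℕ :=
  Nat.card (EquivEnd H b)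

/-- `n_V := dim_{End_H(V)} V`, characterised by `|End_H(V)| ^ n_V = |V|` (for a finite
irreducible `H`-module `V`, `End_H(V)` is a field and `V` a vector space over it). -/
noncomputable def dimEnd (H : Type*) [Group H] {V : Type*} [Group V]
    (b : H →* MulAut V) : ℕ :=
  sInf {n : ℕ | endCard H b ^ n = Nat.card V}

/-- The set of derivations `ζ : H → V` (satisfying `ζ(h₁h₂) = ζ(h₁)^{h₂} · ζ(h₂)`). -/
def DerSet (H : Type*) [Group H] {V : Type*} [Group V] (b : H →* MulAut V) :
    Set (H → V) :=
  {ζ | ∀ h₁ h₂ : H, ζ (h₁ * h₂) = b h₂ (ζ h₁) * ζ h₂}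

/-- The set of inner derivations `h ↦ [h,v] = v^h · v⁻¹`. -/
def IderSet (H : Type*) [Group H] {V : Type*} [Group V] (b : H →* MulAut V) :
    Set (H → V) :=
  {ζ | ∃ v : V, ∀ h : H, ζ h = b h v * v⁻¹}

/-- `m := dim_{End_H(V)} H¹(H,V)` where `H¹(H,V) = Der(H,V)/Ider(H,V)`, characterised by
`|End_H(V)| ^ m · |Ider(H,V)| = |Der(H,V)|`. -/
noncomputable def h1Dim (H : Type*) [Group H] {V : Type*} [Group V]
    (b : H →* MulAut V) : ℕ :=
  sInf {m : ℕ | endCard H b ^ m * Nat.card (IderSet H b) = Nat.card (DerSet H b)}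

/-- The probability that a uniformly random element of `H` fixes a nonzero (i.e.
non-identity) vector of `V`. -/
noncomputable def fixProb (H : Type*) [Group H] {V : Type*} [Group V]
    (b : H →* MulAut V) : ℝ :=
  Nat.card {h : H // ∃ v : V, v ≠ 1 ∧ b h v = v} / (Nat.card H : ℝ)

/-- `A` is a set of representatives for the irreducible `G`-modules which are
`G`-isomorphic to a chief factor of `G` satisfying `P`:  every member of `A` is an
irreducible abelian `G`-group `G`-isomorphic to some chief factor satisfying `P`, and
every chief factor of `G` satisfying `P` is `G`-isomorphic to exactly one member
of `A`. -/
def IsModuleRepSet {G : Type} [Group G] (P : Subgroup G → Subgroup G → Prop)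
    (A : Finset (GGroup G)) : Prop :=
  (∀ V ∈ A, (∀ x y : V.carrier, x * y = y * x) ∧ IsIrreducibleGGroup G V.act ∧
      ∃ X Y : Subgroup G, IsChiefFactorPair G X Y ∧ P X Y ∧ RepresentsFactor G V.act X Y) ∧
  ∀ X Y : Subgroup G, IsChiefFactorPair G X Y → P X Y →
    ∃! V : GGroup G, V ∈ A ∧ RepresentsFactor G V.act X Y

/-- `A` is a set of representatives for the irreducible `G`-groups which are
`G`-equivalent to a chief factor of `G` satisfying `P`. -/
def IsGGroupRepSet {G : Type} [Group G] (P : Subgroup G → Subgroup G → Prop)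
    (A : Finset (GGroup G)) : Prop :=
  (∀ V ∈ A, IsIrreducibleGGroup G V.act ∧
      ∃ X Y : Subgroup G, IsChiefFactorPair G X Y ∧ P X Y ∧ FactorGEquiv X Y V.act) ∧
  ∀ X Y : Subgroup G, IsChiefFactorPair G X Y → P X Y →
    ∃! V : GGroup G, V ∈ A ∧ FactorGEquiv X Y V.act

/-!
A maximal subgroup `M` in `Ω_{G,V}` supplements a normal subgroup mapping equivariantly onto `V`,
so it lies in the kernel of a derivation `d : G → V` with `d (C_G(V)) = V`. The conjugates of that
kernel lie in `L = {g | d g ∈ [g, V]}`, a set depending only on the class of `d` in `H¹(G, V)`.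

There are few classes: along a chief series the derivations vanishing on `N_i` shrink only when
`N_{i+1}/N_i` is complemented and isomorphic to `V`, and then by an index of at most `q_V`, up to
the last `N_i` centralizing `V`, where all the remaining derivations are inner by coprimality.
Hence `|H¹(G, V)| ≤ q_V ^ δ_V`.

If `g` has at least `m` fixed points on `V`, then `|V : [g, V]| ≥ m` and `L` has density at most
`1/m` in the coset `C_G(V) g`. Let `A` be a union of such cosets and `q_V ^ δ_V ≤ m ^ N`. By the
union bound over the classes, `j` random elements of `A` lie in a common `L` with probability at
most `min 1 (m ^ (N - j))`, and these sum to at most `N + m/(m-1)`. Waiting for entries in `A`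
costs a factor `|G|/|A|`. The two bounds come from the elements with a non-trivial fixed point
(`m = q_V`, `|G|/|A| ≤ |V|`) and from `A = C_G(V)` (`m = |V|`, `N = ⌈δ_V/n_V⌉`).
-/

section Probability

open Finset

lemma hasSum_choose_mul_pow_mul_one_sub_pow {p : ℝ} (hp₀ : 0 < p) (hp₁ : p ≤ 1) (j : ℕ) :
    HasSum (fun k ↦ k.choose j * p ^ j * (1 - p) ^ (k - j)) p⁻¹ := by
  have hnorm : ‖1 - p‖ < 1 := by
    rw [Real.norm_eq_abs, abs_lt]
    constructor <;> linarith
  have hshift := (hasSum_choose_mul_geometric_of_norm_lt_one j hnorm).mul_left (p ^ j)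
  have hzero : ∑ k ∈ range j, (k.choose j : ℝ) * p ^ j * (1 - p) ^ (k - j) = 0 :=
    sum_eq_zero fun k hk ↦ by simp [Nat.choose_eq_zero_of_lt (mem_range.1 hk)]
  have hval : p ^ j * (1 / (1 - (1 - p)) ^ (j + 1)) = p⁻¹ := by
    rw [sub_sub_cancel, pow_succ]
    field_simp
  rw [← hasSum_nat_add_iff' j, hzero, sub_zero]
  refine (hval ▸ hshift).congr_fun fun k ↦ ?_
  rw [Nat.add_sub_cancel]
  ring

lemma hasSum_binomial_mixture {p : ℝ} (hp₀ : 0 < p) (hp₁ : p ≤ 1) {f : ℕ → ℝ} {s : ℝ}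
    (hf₀ : ∀ j, 0 ≤ f j) (hf : HasSum f s) :
    HasSum (fun k ↦ ∑ j ∈ range (k + 1), k.choose j * p ^ j * (1 - p) ^ (k - j) * f j)
      (p⁻¹ * s) := by
  let F : ℕ × ℕ → ℝ := fun x ↦ x.2.choose x.1 * p ^ x.1 * (1 - p) ^ (x.2 - x.1) * f x.1
  have hrow (j : ℕ) : HasSum (fun k ↦ F (j, k)) (p⁻¹ * f j) :=
    (hasSum_choose_mul_pow_mul_one_sub_pow hp₀ hp₁ j).mul_right (f j)
  have hF₀ : 0 ≤ F := fun x ↦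
    mul_nonneg (mul_nonneg (by positivity) (pow_nonneg (sub_nonneg.2 hp₁) _)) (hf₀ _)
  have hF : HasSum F (p⁻¹ * s) := by
    have hsummable : Summable F := (summable_prod_of_nonneg hF₀).2
      ⟨fun j ↦ (hrow j).summable, by simpa only [(hrow _).tsum_eq] using (hf.mul_left _).summable⟩
    have heq := (hsummable.hasSum.prod_fiberwise hrow).unique (hf.mul_left p⁻¹)
    exact heq ▸ hsummable.hasSum
  refine ((Equiv.prodComm ℕ ℕ).hasSum_iff.2 hF).prod_fiberwise fun k ↦ ?_
  refine hasSum_sum_of_ne_finset_zero fun j hj ↦ ?_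
  simp [F, Nat.choose_eq_zero_of_lt (not_lt.1 (mt mem_range.2 hj))]

lemma summable_min_one_mul_pow {r x : ℝ} (hr₀ : 0 ≤ r) (hr₁ : r < 1) (hx : 0 ≤ x) :
    Summable fun j : ℕ ↦ min 1 (x * r ^ j) :=
  .of_nonneg_of_le (fun _ ↦ by positivity) (fun _ ↦ min_le_right _ _)
    ((summable_geometric_of_lt_one hr₀ hr₁).mul_left x)

lemma tsum_min_one_mul_pow_le {r x : ℝ} (hr₀ : 0 ≤ r) (hr₁ : r < 1) (hx : 0 ≤ x) {N : ℕ}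
    (hN : x * r ^ N ≤ 1) : ∑' j : ℕ, min 1 (x * r ^ j) ≤ N + (1 - r)⁻¹ := by
  have hsummable := summable_min_one_mul_pow hr₀ hr₁ hx
  rw [← hsummable.sum_add_tsum_nat_add N]
  refine add_le_add ?_ ?_
  · simpa using sum_le_card_nsmul (range N) _ 1 fun j _ ↦ min_le_left 1 (x * r ^ j)
  · rw [← tsum_geometric_of_lt_one hr₀ hr₁]
    refine ((summable_nat_add_iff N).2 hsummable).tsum_le_tsum (fun j ↦ ?_)
      (summable_geometric_of_lt_one hr₀ hr₁)
    calc min 1 (x * r ^ (j + N)) ≤ x * r ^ N * r ^ j := by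
          rw [pow_add, mul_comm (r ^ j), ← mul_assoc]
          exact min_le_right _ _
      _ ≤ r ^ j := mul_le_of_le_one_left (by positivity) hN

section Finite

variable {ι α T : Type*} [Fintype ι]

lemma card_piFinset_ite [DecidableEq ι] (A B : Finset α) (J : Finset ι) :
    #(Fintype.piFinset fun i ↦ if i ∈ J then A else B) =
      #A ^ #J * #B ^ (Fintype.card ι - #J) := by
  simp_rw [Fintype.card_piFinset, apply_ite card, prod_ite, prod_const]
  congr 2
  · simp
  · rw [← card_compl]
    congr 1
    ext
    simp

variable [Fintype α] [DecidableEq α] [Fintype T]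

lemma card_filter_mem_iff_le [DecidableEq ι] {A : Finset α} {B : T → Finset α} {r : ℝ}
    {E : Finset (ι → α)} (hE : ∀ x ∈ E, ∃ t, ∀ i, x i ∈ B t)
    (hAB : ∀ t, (#(A ∩ B t) : ℝ) ≤ r * #A) (J : Finset ι) :
    (#{x ∈ E | ∀ i, x i ∈ A ↔ i ∈ J} : ℝ) ≤
      #A ^ #J * #Aᶜ ^ (Fintype.card ι - #J) * min 1 (Fintype.card T * r ^ #J) := by
  rw [mul_min_of_nonneg _ _ (by positivity), mul_one]
  refine le_min ?_ ?_
  · have hsub : ({x ∈ E | ∀ i, x i ∈ A ↔ i ∈ J} : Finset (ι → α)) ⊆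
        Fintype.piFinset fun i ↦ if i ∈ J then A else Aᶜ := by
      intro x hx
      rw [Fintype.mem_piFinset]
      intro i
      have := (mem_filter.1 hx).2 i
      split_ifs with hi <;> simp [this, hi]
    exact_mod_cast (card_le_card hsub).trans_eq (card_piFinset_ite A Aᶜ J)
  · have hsub : ({x ∈ E | ∀ i, x i ∈ A ↔ i ∈ J} : Finset (ι → α)) ⊆
        univ.biUnion fun t ↦ Fintype.piFinset fun i ↦ if i ∈ J then A ∩ B t else Aᶜ := by
      intro x hx
      obtain ⟨t, ht⟩ := hE x (mem_filter.1 hx).1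
      refine mem_biUnion.2 ⟨t, mem_univ t, Fintype.mem_piFinset.2 fun i ↦ ?_⟩
      have := (mem_filter.1 hx).2 i
      split_ifs with hi <;> simp [this, hi, ht i]
    calc (#{x ∈ E | ∀ i, x i ∈ A ↔ i ∈ J} : ℝ)
        ≤ ∑ t, (#(A ∩ B t) : ℝ) ^ #J * #Aᶜ ^ (Fintype.card ι - #J) := by
          simp_rw [← Nat.cast_pow, ← Nat.cast_mul, ← card_piFinset_ite]
          exact_mod_cast (card_le_card hsub).trans card_biUnion_le
      _ ≤ ∑ _t : T, (r * #A) ^ #J * #Aᶜ ^ (Fintype.card ι - #J) := by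
          gcongr with t
          exact hAB t
      _ = #A ^ #J * #Aᶜ ^ (Fintype.card ι - #J) * (Fintype.card T * r ^ #J) := by
          rw [sum_const, card_univ, nsmul_eq_mul, mul_pow]
          ring

lemma card_le_sum_choose_mul_min {A : Finset α} {B : T → Finset α} {r : ℝ}
    {E : Finset (ι → α)} (hE : ∀ x ∈ E, ∃ t, ∀ i, x i ∈ B t)
    (hAB : ∀ t, (#(A ∩ B t) : ℝ) ≤ r * #A) :
    (#E : ℝ) ≤ ∑ j ∈ range (Fintype.card ι + 1), (Fintype.card ι).choose j *
      (#A ^ j * #Aᶜ ^ (Fintype.card ι - j) * min 1 (Fintype.card T * r ^ j)) := by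
  classical
  have hcover : E ⊆ univ.powerset.biUnion fun J ↦ {x ∈ E | ∀ i, x i ∈ A ↔ i ∈ J} := by
    intro x hx
    refine mem_biUnion.2 ⟨univ.filter (x · ∈ A), mem_powerset.2 (subset_univ _), ?_⟩
    exact mem_filter.2 ⟨hx, fun i ↦ by simp⟩
  calc (#E : ℝ) ≤ ∑ J ∈ univ.powerset, (#{x ∈ E | ∀ i, x i ∈ A ↔ i ∈ J} : ℝ) := by
        exact_mod_cast (card_le_card hcover).trans card_biUnion_le
    _ ≤ ∑ J ∈ univ.powerset, (#A : ℝ) ^ #J * #Aᶜ ^ (Fintype.card ι - #J) *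
          min 1 (Fintype.card T * r ^ #J) :=
        sum_le_sum fun J _ ↦ card_filter_mem_iff_le hE hAB J
    _ = _ := by
        rw [sum_powerset_apply_card
          (fun j ↦ (#A : ℝ) ^ j * #Aᶜ ^ (Fintype.card ι - j) * min 1 (Fintype.card T * r ^ j))]
        simp_rw [nsmul_eq_mul, card_univ]

lemma card_div_pow_le_sum_choose {A : Finset α} {B : T → Finset α} {r : ℝ}
    {E : Finset (ι → α)} (hE : ∀ x ∈ E, ∃ t, ∀ i, x i ∈ B t)
    (hAB : ∀ t, (#(A ∩ B t) : ℝ) ≤ r * #A) (hA : A.Nonempty) :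
    (#E : ℝ) / Fintype.card α ^ Fintype.card ι ≤
      ∑ j ∈ range (Fintype.card ι + 1), (Fintype.card ι).choose j *
        (#A / Fintype.card α : ℝ) ^ j * (1 - #A / Fintype.card α) ^ (Fintype.card ι - j) *
          min 1 (Fintype.card T * r ^ j) := by
  have hα : (0 : ℝ) < Fintype.card α := by
    exact_mod_cast hA.card_pos.trans_le (card_le_univ A)
  rw [div_le_iff₀ (by positivity), sum_mul]
  refine (card_le_sum_choose_mul_min hE hAB).trans_eq (sum_congr rfl fun j hj ↦ ?_)
  have hcompl : (1 - #A / Fintype.card α : ℝ) = #Aᶜ / Fintype.card α := by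
    rw [card_compl, Nat.cast_sub (card_le_univ A), sub_div, div_self hα.ne']
  rw [hcompl, div_pow, div_pow, ← Nat.add_sub_of_le (mem_range_succ_iff.1 hj), pow_add,
    Nat.add_sub_cancel_left]
  field_simp

end Finite

lemma tsum_card_div_pow_le {α T : Type*} [Finite α] [Finite T] {A : Set α} (hA : A.Nonempty)
    {B : T → Set α} {r : ℝ} (hr₀ : 0 ≤ r) (hr₁ : r < 1)
    (hAB : ∀ t, (Nat.card ↥(A ∩ B t) : ℝ) ≤ r * Nat.card A) {N : ℕ}
    (hT : Nat.card T * r ^ N ≤ 1) {E : ∀ k, Set (Fin k → α)}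
    (hE : ∀ k, ∀ x ∈ E k, ∃ t, ∀ i, x i ∈ B t) :
    ∑' k, (Nat.card (E k) : ℝ) / Nat.card α ^ k ≤
      (N + (1 - r)⁻¹) * (Nat.card α / Nat.card A) := by
  classical
  have := Fintype.ofFinite α
  have := Fintype.ofFinite T
  have hA₀ : (0 : ℝ) < #A.toFinset := by exact_mod_cast (Set.toFinset_nonempty.2 hA).card_pos
  have hα₀ : (0 : ℝ) < Fintype.card α := hA₀.trans_le (by exact_mod_cast card_le_univ _)
  set p : ℝ := #A.toFinset / Fintype.card α
  have hmix := hasSum_binomial_mixture (p := p) (by positivity)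
    ((div_le_one hα₀).2 (by exact_mod_cast card_le_univ _))
    (f := fun j ↦ min 1 (Fintype.card T * r ^ j)) (fun j ↦ by positivity)
    (summable_min_one_mul_pow hr₀ hr₁ (Nat.cast_nonneg _)).hasSum
  have hterm (k : ℕ) : (Nat.card (E k) : ℝ) / Nat.card α ^ k ≤ ∑ j ∈ range (k + 1),
      k.choose j * p ^ j * (1 - p) ^ (k - j) * min 1 (Fintype.card T * r ^ j) := by
    have hle := card_div_pow_le_sum_choose (E := (E k).toFinset) (A := A.toFinset)
      (B := fun t ↦ (B t).toFinset) (r := r) (by simpa using hE k)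
      (fun t ↦ by simpa only [← Set.toFinset_inter, ← Nat.card_eq_card_toFinset] using hAB t)
      (Set.toFinset_nonempty.2 hA)
    rw [Fintype.card_fin] at hle
    rwa [Nat.card_eq_card_toFinset (E k), Nat.card_eq_fintype_card]
  rw [Nat.card_eq_fintype_card] at hT
  calc ∑' k, (Nat.card (E k) : ℝ) / Nat.card α ^ k
      ≤ p⁻¹ * ∑' j : ℕ, min 1 (Fintype.card T * r ^ j) :=
        (hmix.summable.of_nonneg_of_le (fun k ↦ by positivity) hterm).tsum_le_tsum hterm
          hmix.summable |>.trans_eq hmix.tsum_eq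
    _ ≤ p⁻¹ * (N + (1 - r)⁻¹) := by
        gcongr
        exact tsum_min_one_mul_pow_le hr₀ hr₁ (Nat.cast_nonneg _) hT
    _ = (N + (1 - r)⁻¹) * (Nat.card α / Nat.card A) := by
        rw [inv_div, mul_comm, Nat.card_eq_card_toFinset A, Nat.card_eq_fintype_card (α := α)]

end Probability

section Derivations

variable {V : Type*} [CommGroup V]

/-- The group of derivations (`1`-cocycles) `d : G → V`. The convention
`d (g * h) = d g * a g (d h)` is the one for left actions, whereas `DerSet` uses the opposite
one. -/
def derivations (a : G →* MulAut V) : Subgroup (G → V) where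
  carrier := {d | ∀ g h, d (g * h) = d g * a g (d h)}
  one_mem' := by simp
  mul_mem' {d e} hd he g h := by
    simp only [Pi.mul_apply, hd g h, he g h, map_mul]
    exact mul_mul_mul_comm _ _ _ _
  inv_mem' {d} hd g h := by
    simp only [Pi.inv_apply, hd g h, map_inv, mul_inv]

variable {a : G →* MulAut V}

namespace derivations

instance : FunLike (derivations a) G V where
  coe d := d.1
  coe_injective := Subtype.val_injective

lemma map_mul (d : derivations a) (g h : G) : d (g * h) = d g * a g (d h) := d.2 g h

@[simp] lemma mul_apply (d e : derivations a) (g : G) : (d * e) g = d g * e g := rfl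

@[simp] lemma one_apply (g : G) : (1 : derivations a) g = 1 := rfl

@[simp] lemma map_one (d : derivations a) : d 1 = 1 := by
  simpa using map_mul d 1 1

lemma map_inv (d : derivations a) (g : G) : d g⁻¹ = (a g⁻¹ (d g))⁻¹ := by
  rw [eq_inv_iff_mul_eq_one, ← map_mul, inv_mul_cancel, map_one]

/-- The kernel of a derivation, which is in general not a normal subgroup. -/
def ker (d : derivations a) : Subgroup G where
  carrier := {g | d g = 1}
  one_mem' := map_one d
  mul_mem' {g h} hg hh := by simp_all [map_mul]
  inv_mem' {g} hg := by simp_all [map_inv]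

lemma mem_ker {d : derivations a} {g : G} : g ∈ ker d ↔ d g = 1 := Iff.rfl

lemma map_mul_of_mem_ker {c : G} (hc : c ∈ a.ker) (d : derivations a) (g : G) :
    d (c * g) = d c * d g := by
  rw [map_mul, MonoidHom.mem_ker.1 hc, MulAut.one_apply]

lemma map_conj_of_mem_ker {c : G} (hc : c ∈ a.ker) (d : derivations a) (g : G) :
    d (g * c * g⁻¹) = a g (d c) := by
  have hcomm : d (g * c * g⁻¹ * g) = d (g * c * g⁻¹) * d g :=
    map_mul_of_mem_ker (a.normal_ker.conj_mem c hc g) d g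
  rw [inv_mul_cancel_right, map_mul, mul_comm] at hcomm
  exact (mul_right_cancel hcomm).symm

variable (a) in
/-- The restriction of derivations of `G` to a subgroup. -/
def restrict (N : Subgroup G) : derivations a →* derivations (a.comp N.subtype) where
  toFun d := ⟨fun x ↦ d x, fun x y ↦ map_mul d x y⟩
  map_one' := rfl
  map_mul' _ _ := rfl

@[simp] lemma restrict_apply {N : Subgroup G} (d : derivations a) (x : N) :
    restrict a N d x = d x := rfl

end derivations

lemma exists_pow_index_eq_of_le_ker (d : derivations a) {N : Subgroup G} [N.FiniteIndex]
    (hN : N ≤ derivations.ker d) : ∃ w : V, ∀ g, d g ^ N.index = w * (a g w)⁻¹ := by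
  have := Fintype.ofFinite (G ⧸ N)
  let e : G ⧸ N → V := Quotient.lift d fun g h hgh ↦ by
    have hmem := derivations.mem_ker.1 (hN (QuotientGroup.leftRel_apply.1 hgh))
    rw [← mul_inv_cancel_left g h, derivations.map_mul, hmem, _root_.map_one, mul_one]
  have he (g : G) (x : G ⧸ N) : e (g • x) = d g * a g (e x) := by
    induction x using QuotientGroup.induction_on
    exact derivations.map_mul d g _
  -- Averaging over `G ⧸ N`: translating the product of all values by `g` permutes the factors.
  refine ⟨∏ x, e x, fun g ↦ eq_mul_inv_of_mul_eq ?_⟩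
  calc d g ^ N.index * a g (∏ x, e x) = ∏ x, e (g • x) := by
        simp_rw [he, Finset.prod_mul_distrib, map_prod, Finset.prod_const, Finset.card_univ,
          Subgroup.index, Nat.card_eq_fintype_card]
    _ = ∏ x, e x := Equiv.prod_comp (MulAction.toPerm g) e

variable (a)

/-- The endomorphism `v ↦ [g, v] = a g v * v⁻¹` of the `G`-module `V`. -/
def commutatorHom (g : G) : V →* V := (a g).toMonoidHom / MonoidHom.id V

@[simp] lemma commutatorHom_apply (g : G) (v : V) : commutatorHom a g v = a g v * v⁻¹ :=
  div_eq_mul_inv _ _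

/-- The homomorphism sending `v` to the inner derivation `g ↦ a g v * v⁻¹`. -/
def innerHom : V →* derivations a where
  toFun v := ⟨fun g ↦ commutatorHom a g v, fun g h ↦ by simp [mul_comm, mul_left_comm]⟩
  map_one' := by ext; simp
  map_mul' v w := Subtype.ext <| funext fun g ↦ map_mul (commutatorHom a g) v w

/-- The subgroup of inner derivations. -/
def innerDerivations : Subgroup (derivations a) := (innerHom a).range

/-- The derivations that are trivial on the subgroup `N`. -/
def vanishing (N : Subgroup G) : Subgroup (derivations a) := (derivations.restrict a N).ker

variable {a}

@[simp] lemma innerHom_apply (v : V) (g : G) : innerHom a v g = a g v * v⁻¹ :=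
  commutatorHom_apply a g v

lemma mem_vanishing {N : Subgroup G} {d : derivations a} :
    d ∈ vanishing a N ↔ ∀ x ∈ N, d x = 1 := by
  simp [vanishing, MonoidHom.mem_ker, DFunLike.ext_iff]

variable (a) in
lemma vanishing_antitone : Antitone (vanishing a) :=
  fun _ _ hXY _ hd ↦ mem_vanishing.2 fun x hx ↦ mem_vanishing.1 hd x (hXY hx)

end Derivations

section IrreducibleModules

variable {V : Type*} [CommGroup V] {a : G →* MulAut V}

lemma EquivEnd.injective_apply (hI : IsIrreducibleGGroup G a) {v : V} (hv : v ≠ 1) :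
    Function.Injective fun e : EquivEnd G a ↦ e.1 v := by
  intro e f hef
  have htop : e.1.eqLocus f.1 = ⊤ :=
    (hI.2 _ inferInstance fun g w (hw : e.1 w = f.1 w) ↦
      show e.1 (a g w) = f.1 (a g w) by rw [e.2, f.2, hw]).resolve_left
      fun hbot ↦ hv ((Subgroup.eq_bot_iff_forall _).1 hbot v hef)
  exact Subtype.ext (MonoidHom.eq_of_eqOn_top fun w _ ↦ htop.ge (Subgroup.mem_top w))

lemma EquivEnd.finite [Finite V] : Finite (EquivEnd G a) :=
  .of_injective (fun e v ↦ e.1 v) fun _ _ h ↦ Subtype.ext (DFunLike.coe_injective h)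

lemma endCard_le_card_ker_commutatorHom [Finite V] (hI : IsIrreducibleGGroup G a) {g : G}
    {v : V} (hv : v ≠ 1) (hgv : a g v = v) : endCard G a ≤ Nat.card (commutatorHom a g).ker := by
  let eval (e : EquivEnd G a) : (commutatorHom a g).ker :=
    ⟨e.1 v, by rw [MonoidHom.mem_ker, commutatorHom_apply, ← e.2, hgv, mul_inv_cancel]⟩
  exact Nat.card_le_card_of_injective eval fun e f hef ↦
    EquivEnd.injective_apply hI hv (congrArg Subtype.val hef)

lemma two_le_endCard [Finite V] (hI : IsIrreducibleGGroup G a) : 2 ≤ endCard G a := by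
  have := hI.1
  have := EquivEnd.finite (a := a)
  obtain ⟨v, hv⟩ := exists_ne (1 : V)
  have : Nontrivial (EquivEnd G a) :=
    ⟨⟨MonoidHom.id V, fun _ _ ↦ rfl⟩, ⟨1, fun _ _ ↦ (map_one _).symm⟩,
      fun h ↦ hv (DFunLike.congr_fun (Subtype.ext_iff.1 h) v)⟩
  exact Finite.one_lt_card

variable (a) in
/-- The ring structure on `EquivEnd G a` for a `G`-module `V`: the endomorphisms of the additive
group of `V` commuting with the action. -/
def endRing : Subring (AddMonoid.End (Additive V)) :=
  Subring.centralizer (Set.range fun g ↦ MonoidHom.toAdditive (a g).toMonoidHom)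

lemma mem_endRing {f : AddMonoid.End (Additive V)} :
    f ∈ endRing a ↔ ∀ g v, f (.ofMul (a g v)) = .ofMul (a g (f (.ofMul v)).toMul) :=
  Subring.mem_centralizer_iff.trans <| Set.forall_mem_range.trans <| forall_congr' fun _ ↦
    DFunLike.ext_iff.trans (forall_congr' fun _ ↦ eq_comm)

variable (a) in
/-- `endRing a` has the elements of `EquivEnd G a`, written additively. -/
def endRingEquiv : endRing a ≃ EquivEnd G a :=
  MonoidHom.toAdditive.symm.subtypeEquiv fun _ ↦ mem_endRing

lemma noZeroDivisors_endRing (hI : IsIrreducibleGGroup G a) : NoZeroDivisors (endRing a) where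
  eq_zero_or_eq_zero_of_mul_eq_zero {e f} hef := by
    by_contra! hne
    obtain ⟨v, hv⟩ := DFunLike.ne_iff.1 (Subtype.coe_ne_coe.2 hne.2)
    have hzero : e.1 (f.1 v) = 0 := DFunLike.congr_fun (Subtype.ext_iff.1 hef) v
    exact hne.1 <| (endRingEquiv a).injective <|
      EquivEnd.injective_apply (v := (f.1 v).toMul) hI hv hzero

lemma exists_endCard_pow_eq_card [Finite V] (hI : IsIrreducibleGGroup G a) :
    ∃ n, endCard G a ^ n = Nat.card V := by
  have := EquivEnd.finite (a := a)
  have : Finite (endRing a) := .of_equiv _ (endRingEquiv a).symm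
  classical
  have := noZeroDivisors_endRing hI
  have : Nontrivial (endRing a) :=
    Finite.one_lt_card_iff_nontrivial.1 (Nat.card_congr (endRingEquiv a) ▸ two_le_endCard hI)
  have : IsDomain (endRing a) := NoZeroDivisors.to_isDomain _
  let _ := Fintype.ofFinite (endRing a)
  let _ := Fintype.divisionRingOfIsDomain (endRing a)
  refine ⟨Module.finrank (endRing a) (Additive V), ?_⟩
  rw [endCard, ← Nat.card_congr (endRingEquiv a), ← Module.natCard_eq_pow_finrank]
  rfl

lemma endCard_pow_dimEnd [Finite V] (hI : IsIrreducibleGGroup G a) :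
    endCard G a ^ dimEnd G a = Nat.card V :=
  Nat.sInf_mem (exists_endCard_pow_eq_card hI)

variable (a) in
/-- The subgroup of the elements of `V` that are fixed by the subgroup `X` of `G`. -/
def fixedBy (X : Subgroup G) : Subgroup V where
  carrier := {v | ∀ x ∈ X, a x v = v}
  one_mem' x _ := map_one (a x)
  mul_mem' hv hw x hx := by rw [map_mul, hv x hx, hw x hx]
  inv_mem' hv x hx := by rw [map_inv, hv x hx]

lemma fixedBy_eq_bot (hI : IsIrreducibleGGroup G a) {X : Subgroup G} [hX : X.Normal]
    (hXa : ¬X ≤ a.ker) : fixedBy a X = ⊥ := by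
  refine (hI.2 _ inferInstance fun g v hv ↦ ?_).resolve_right fun htop ↦ hXa fun x hx ↦
    MulEquiv.ext fun v ↦ htop.ge (Subgroup.mem_top v) x hx
  intro x hx
  have hfix := hv (g⁻¹ * x * g) (by simpa using hX.conj_mem x hx g⁻¹)
  rw [map_mul, map_mul, MulAut.mul_apply, MulAut.mul_apply, map_inv, MulAut.inv_apply,
    MulEquiv.symm_apply_eq] at hfix
  exact hfix

lemma exists_prime_pow_eq_one [Finite V] (hI : IsIrreducibleGGroup G a) :
    ∃ p, p.Prime ∧ p ∣ Nat.card V ∧ ∀ v : V, v ^ p = 1 := by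
  have := hI.1
  obtain ⟨p, hp, hpV⟩ := Nat.exists_prime_and_dvd (Finite.one_lt_card (α := V)).ne'
  have := Fact.mk hp
  obtain ⟨v, hv⟩ := exists_prime_orderOf_dvd_card' p hpV
  have htop : (powMonoidHom p : V →* V).ker = ⊤ :=
    (hI.2 _ inferInstance fun g w (hw : w ^ p = 1) ↦
      show a g w ^ p = 1 by rw [← map_pow, hw, map_one]).resolve_left fun hbot ↦
        hp.one_lt.ne (by
          rw [← hv, (Subgroup.eq_bot_iff_forall _).1 hbot v (hv ▸ pow_orderOf_eq_one v),
            orderOf_one])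
  exact ⟨p, hp, hpV, fun v ↦ htop.ge (Subgroup.mem_top v)⟩

end IrreducibleModules

section ChiefFactors

variable {V : Type*}

/-- `ψ` is a homomorphism of `G`-groups from the normal subgroup `X` of `G`, on which `G` acts by
conjugation, to `V`. -/
def ConjEquivariant [Group V] (a : G →* MulAut V) {X : Subgroup G} [X.Normal] (ψ : X →* V) :
    Prop :=
  ∀ g x, ψ (MulAut.conjNormal g x) = a g (ψ x)

lemma representsFactor_iff [Group V] {a : G →* MulAut V} {X Y : Subgroup G} [X.Normal] :
    RepresentsFactor G a X Y ↔
      ∃ ψ : X →* V, Function.Surjective ψ ∧ ψ.ker = Y.subgroupOf X ∧ ConjEquivariant a ψ := by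
  refine exists_congr fun ψ ↦ and_congr_right' <| and_congr ?_
    ⟨fun h g x ↦ h g x _ (MulAut.conjNormal_apply g x), fun h g x y hxy ↦ ?_⟩
  · simp only [SetLike.ext_iff, MonoidHom.mem_ker, Subgroup.mem_subgroupOf]
  · rw [← h, Subtype.ext (hxy.trans (MulAut.conjNormal_apply g x).symm)]

lemma ConjEquivariant.normal_map_comap [Group V] {a : G →* MulAut V} {X : Subgroup G} [X.Normal]
    {ψ : X →* V} (hψ : ConjEquivariant a ψ) {W : Subgroup V} (hW : ∀ g, ∀ v ∈ W, a g v ∈ W) :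
    ((W.comap ψ).map X.subtype).Normal := by
  refine ⟨?_⟩
  rintro _ ⟨x, hx, rfl⟩ g
  refine ⟨MulAut.conjNormal g x, ?_, MulAut.conjNormal_apply g x⟩
  exact Subgroup.mem_comap.2 (hψ g x ▸ hW g _ hx)

lemma ConjEquivariant.le_ker [CommGroup V] {a : G →* MulAut V} {X : Subgroup G} [X.Normal]
    {ψ : X →* V} (hψ : ConjEquivariant a ψ) (hsurj : Function.Surjective ψ) : X ≤ a.ker := by
  refine fun x hx ↦ MulEquiv.ext fun v ↦ ?_
  obtain ⟨y, rfl⟩ := hsurj v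
  have hconj : MulAut.conjNormal x y = (⟨x, hx⟩ : X) * y * ⟨x, hx⟩⁻¹ :=
    Subtype.ext (MulAut.conjNormal_apply x y)
  rw [← hψ, hconj, map_mul, map_mul, map_inv, mul_inv_cancel_comm, MulAut.one_apply]

namespace IsChiefFactorPair

variable {X Y : Subgroup G}

lemma normal_left (h : IsChiefFactorPair G X Y) : X.Normal := h.1

lemma normal_right (h : IsChiefFactorPair G X Y) : Y.Normal := h.2.1

lemma lt (h : IsChiefFactorPair G X Y) : Y < X := h.2.2.1

lemma commutator_le [Group.IsSolvable G] (h : IsChiefFactorPair G X Y) : ⁅X, X⁆ ≤ Y := by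
  have := h.normal_left
  have := h.normal_right
  have hle : ⁅X, X⁆ ⊔ Y ≤ X := sup_le (Subgroup.commutator_le_right X X) h.lt.le
  rcases h.2.2.2 _ inferInstance le_sup_right hle with hY | hX
  · exact hY ▸ le_sup_left
  · have hbot : X.map (QuotientGroup.mk' Y) ≠ ⊥ := by
      rw [Ne, Subgroup.map_eq_bot_iff, QuotientGroup.ker_mk']
      exact h.lt.not_ge
    refine ((Group.IsSolvable.commutator_lt_of_ne_bot hbot).ne ?_).elim
    conv_rhs => rw [← hX]
    rw [Subgroup.map_sup, Subgroup.map_commutator, QuotientGroup.map_mk'_self, sup_bot_eq]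

lemma eq_of_mem_of_notMem (h : IsChiefFactorPair G X Y) {N : Subgroup G} (hN : N.Normal)
    (hYN : Y ≤ N) (hNX : N ≤ X) {x : G} (hxN : x ∈ N) (hxY : x ∉ Y) : N = X :=
  (h.2.2.2 N hN hYN hNX).resolve_left fun hNY ↦ hxY (hNY ▸ hxN)

lemma pow_mem [Finite G] (h : IsChiefFactorPair G X Y) (hcomm : ⁅X, X⁆ ≤ Y) {p : ℕ}
    (hp : p.Prime) (hdvd : p ∣ Y.relIndex X) {x : G} (hx : x ∈ X) : x ^ p ∈ Y := by
  have := h.normal_left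
  have := h.normal_right
  have := Fact.mk hp
  have hmul {x y : G} (hx : x ∈ X) (hy : y ∈ X) :
      QuotientGroup.mk' Y (x * y) ^ p = QuotientGroup.mk' Y x ^ p * QuotientGroup.mk' Y y ^ p := by
    have : Commute (QuotientGroup.mk' Y x) (QuotientGroup.mk' Y y) := by
      rw [← commutatorElement_eq_one_iff_commute, ← map_commutatorElement]
      exact (QuotientGroup.eq_one_iff _).2 (hcomm (Subgroup.commutator_mem_commutator hx hy))
    rw [map_mul, this.mul_pow]
  have hone {x : G} : x ^ p ∈ Y ↔ QuotientGroup.mk' Y x ^ p = 1 := by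
    rw [← map_pow]
    exact (QuotientGroup.eq_one_iff _).symm
  let P : Subgroup G :=
    { carrier := {x | x ∈ X ∧ x ^ p ∈ Y}
      one_mem' := ⟨X.one_mem, by simp⟩
      mul_mem' := fun ⟨hx, hxp⟩ ⟨hy, hyp⟩ ↦
        ⟨mul_mem hx hy, by
          rw [hone, hmul hx hy, hone.1 hxp, hone.1 hyp, one_mul]⟩
      inv_mem' := fun ⟨hx, hxp⟩ ↦ ⟨inv_mem hx, by simpa using hxp⟩ }
  have hP : P.Normal := ⟨fun x ⟨hx, hxp⟩ g ↦
    ⟨h.normal_left.conj_mem x hx g, by simpa [conj_pow] using h.normal_right.conj_mem _ hxp g⟩⟩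
  obtain ⟨z, hz⟩ := exists_prime_orderOf_dvd_card' (G := X ⧸ Y.subgroupOf X) p hdvd
  obtain ⟨z, rfl⟩ := QuotientGroup.mk_surjective z
  have hzp : (z : G) ^ p ∈ Y := by
    have := pow_orderOf_eq_one (z : X ⧸ Y.subgroupOf X)
    rwa [hz, ← QuotientGroup.mk_pow, QuotientGroup.eq_one_iff] at this
  have hzY : (z : G) ∉ Y := fun hmem ↦ hp.one_lt.ne <| by
    rw [← hz, (QuotientGroup.eq_one_iff z).2 hmem, orderOf_one]
  have hPX := h.eq_of_mem_of_notMem hP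
    (fun y hy ↦ ⟨h.lt.le hy, Y.pow_mem hy p⟩) (fun _ hx ↦ hx.1) ⟨z.2, hzp⟩ hzY
  exact (hPX.ge hx).2

end IsChiefFactorPair

end ChiefFactors

section FirstCohomology

variable {V : Type*} [CommGroup V] {a : G →* MulAut V} {X Y : Subgroup G}

namespace derivations

/-- The restriction of derivations to a subgroup `X` acting trivially on `V`, as a homomorphism to
the group `X →* V`. -/
def restrictHom (hX : X ≤ a.ker) : derivations a →* X →* V where
  toFun d := .mk' (fun x ↦ d x) fun x y ↦ map_mul_of_mem_ker (hX x.2) d y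
  map_one' := rfl
  map_mul' _ _ := rfl

@[simp] lemma restrictHom_apply (hX : X ≤ a.ker) (d : derivations a) (x : X) :
    restrictHom hX d x = d x := rfl

lemma conjEquivariant_restrictHom [X.Normal] (hX : X ≤ a.ker) (d : derivations a) :
    ConjEquivariant a (restrictHom hX d) := fun g x ↦ by
  rw [restrictHom_apply, MulAut.conjNormal_apply, map_conj_of_mem_ker (hX x.2), restrictHom_apply]

lemma subgroupOf_le_ker_restrictHom (hX : X ≤ a.ker) {d : derivations a}
    (hd : d ∈ vanishing a Y) : Y.subgroupOf X ≤ (restrictHom hX d).ker :=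
  fun x hx ↦ mem_vanishing.1 hd x hx

lemma ker_sup_eq_top (hX : X ≤ a.ker) {d : derivations a}
    (hd : Function.Surjective (restrictHom hX d)) : ker d ⊔ X = ⊤ := by
  refine (Subgroup.eq_top_iff' _).2 fun g ↦ ?_
  obtain ⟨x, hx⟩ := hd (d g)
  rw [restrictHom_apply] at hx
  have hmem : (x : G)⁻¹ * g ∈ ker d := by
    rw [mem_ker, map_mul_of_mem_ker (inv_mem (hX x.2)), ← hx,
      ← map_mul_of_mem_ker (inv_mem (hX x.2)), inv_mul_cancel, map_one]
  rw [← mul_inv_cancel_left (x : G) g]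
  exact mul_mem (Subgroup.mem_sup_right x.2) (Subgroup.mem_sup_left hmem)

end derivations

namespace IsChiefFactorPair

lemma surjective_and_ker_eq (h : IsChiefFactorPair G X Y) (hI : IsIrreducibleGGroup G a)
    [X.Normal] {ψ : X →* V} (hψ : ConjEquivariant a ψ) (hY : Y.subgroupOf X ≤ ψ.ker)
    (hne : ψ ≠ 1) : Function.Surjective ψ ∧ ψ.ker = Y.subgroupOf X := by
  have hrange : ψ.range = ⊤ := by
    refine (hI.2 _ inferInstance ?_).resolve_left (mt MonoidHom.range_eq_bot_iff.1 hne)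
    rintro g _ ⟨x, rfl⟩
    exact ⟨_, hψ g x⟩
  have hnormal : (ψ.ker.map X.subtype).Normal :=
    hψ.normal_map_comap (W := ⊥) fun g v hv ↦ by simpa using hv
  have hker : ψ.ker.map X.subtype = Y := by
    refine (h.2.2.2 _ hnormal ?_ (Subgroup.map_subtype_le _)).resolve_right fun hX ↦ hne ?_
    · rw [← Subgroup.map_subgroupOf_eq_of_le h.lt.le]
      exact Subgroup.map_mono hY
    · rw [← MonoidHom.ker_eq_top_iff]
      refine Subgroup.map_injective X.subtype_injective ?_
      rw [hX, ← MonoidHom.range_eq_map, Subgroup.range_subtype]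
  refine ⟨MonoidHom.range_eq_top.1 hrange, ?_⟩
  rw [← hker, Subgroup.subgroupOf, Subgroup.comap_map_eq_self_of_injective X.subtype_injective]

lemma complemented_and_represents (h : IsChiefFactorPair G X Y) (hI : IsIrreducibleGGroup G a)
    (hX : X ≤ a.ker) {d : derivations a} (hdY : d ∈ vanishing a Y) (hdX : d ∉ vanishing a X) :
    IsComplementedFactor G X Y ∧ RepresentsFactor G a X Y := by
  have := h.normal_left
  have hψ := derivations.conjEquivariant_restrictHom hX d
  obtain ⟨hsurj, hker⟩ := h.surjective_and_ker_eq hI hψ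
    (derivations.subgroupOf_le_ker_restrictHom hX hdY)
    fun hone ↦ hdX (mem_vanishing.2 fun x hx ↦ DFunLike.congr_fun hone ⟨x, hx⟩)
  refine ⟨⟨derivations.ker d, derivations.ker_sup_eq_top hX hsurj, ?_⟩,
    representsFactor_iff.2 ⟨_, hsurj, hker, hψ⟩⟩
  ext x
  refine ⟨fun hx ↦ ?_, fun hx ↦ ⟨mem_vanishing.1 hdY x hx, h.lt.le hx⟩⟩
  exact Subgroup.mem_subgroupOf.1 (hker.le (show (⟨x, hx.2⟩ : X) ∈ _ from hx.1))

end IsChiefFactorPair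

lemma card_conjEquivariant_le_endCard [Finite V] [X.Normal] (h : RepresentsFactor G a X Y) :
    Nat.card {ψ : X →* V // ConjEquivariant a ψ ∧ Y.subgroupOf X ≤ ψ.ker} ≤ endCard G a := by
  obtain ⟨f, hsurj, hker, hf⟩ := representsFactor_iff.1 h
  have := EquivEnd.finite (a := a)
  let compose (e : EquivEnd G a) : {ψ : X →* V // ConjEquivariant a ψ ∧ Y.subgroupOf X ≤ ψ.ker} :=
    ⟨e.1.comp f, fun g x ↦ by rw [MonoidHom.comp_apply, hf, e.2, MonoidHom.comp_apply],
      fun x hx ↦ by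
        rw [MonoidHom.mem_ker, MonoidHom.comp_apply, MonoidHom.mem_ker.1 (hker.ge hx), map_one]⟩
  refine Nat.card_le_card_of_surjective compose ?_
  rintro ⟨ψ, hψ, hY⟩
  let e : V →* V := f.liftOfSurjective hsurj ⟨ψ, hker.trans_le hY⟩
  have he (x : X) : e (f x) = ψ x := f.liftOfRightInverse_comp_apply _ _ ⟨ψ, _⟩ x
  refine ⟨⟨e, fun g ↦ hsurj.forall.2 fun x ↦ ?_⟩, Subtype.ext (MonoidHom.ext he)⟩
  rw [← hf, he, he, hψ]

lemma vanishing_eq_ker_restrictHom (hX : X ≤ a.ker) :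
    vanishing a X = (derivations.restrictHom hX).ker := by
  ext d
  simp [mem_vanishing, MonoidHom.mem_ker, DFunLike.ext_iff]

lemma relIndex_vanishing_le_endCard [Finite G] [Finite V] [X.Normal] (hX : X ≤ a.ker)
    (h : RepresentsFactor G a X Y) :
    (vanishing a X).relIndex (vanishing a Y) ≤ endCard G a := by
  have : Finite (X →* V) := .of_injective _ DFunLike.coe_injective
  rw [vanishing_eq_ker_restrictHom hX, Subgroup.relIndex_ker]
  refine (Nat.card_mono (Set.toFinite {ψ | ConjEquivariant a ψ ∧ Y.subgroupOf X ≤ ψ.ker}) ?_).trans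
    (card_conjEquivariant_le_endCard h)
  rintro _ ⟨d, hd, rfl⟩
  exact ⟨derivations.conjEquivariant_restrictHom hX d,
    derivations.subgroupOf_le_ker_restrictHom hX hd⟩

lemma IsChiefFactorPair.not_dvd_relIndex [Finite G] [Finite V] (h : IsChiefFactorPair G X Y)
    (hcomm : ⁅X, X⁆ ≤ Y) (hI : IsIrreducibleGGroup G a) (hY : Y ≤ a.ker) (hX : ¬X ≤ a.ker)
    {p : ℕ} (hp : p.Prime) (hpV : p ∣ Nat.card V) : ¬p ∣ Y.relIndex X := by
  intro hdvd
  have := h.normal_left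
  have := Fact.mk hp
  have hP : IsPGroup p (X.map a) := by
    rintro ⟨_, x, hx, rfl⟩
    refine ⟨1, Subtype.ext ?_⟩
    rw [pow_one, Subgroup.coe_pow, ← map_pow]
    exact hY (h.pow_mem hcomm hp hdvd hx)
  obtain ⟨v, hv, hv₁⟩ := hP.exists_fixed_point_of_prime_dvd_card_of_fixed_point V hpV
    (a := 1) fun s ↦ map_one s.1
  refine hv₁ ((Subgroup.eq_bot_iff_forall _).1 (fixedBy_eq_bot hI hX) v fun x hx ↦ ?_).symm
  exact hv ⟨a x, Subgroup.mem_map_of_mem a hx⟩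

lemma eq_one_of_mem_vanishing [hX : X.Normal] (hfix : fixedBy a X = ⊥) {d : derivations a}
    (hd : d ∈ vanishing a X) : d = 1 := by
  refine DFunLike.ext _ _ fun g ↦ (Subgroup.eq_bot_iff_forall _).1 hfix _ fun x hx ↦ ?_
  have hconj : g⁻¹ * x * g ∈ X := by simpa using hX.conj_mem x hx g⁻¹
  calc a x (d g) = d (x * g) := by
        rw [derivations.map_mul, mem_vanishing.1 hd x hx, one_mul]
    _ = d (g * (g⁻¹ * x * g)) := by rw [← mul_assoc, ← mul_assoc, mul_inv_cancel, one_mul]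
    _ = d g := by rw [derivations.map_mul, mem_vanishing.1 hd _ hconj, map_one, mul_one]

lemma mem_innerDerivations_of_restrict [X.Normal] (hfix : fixedBy a X = ⊥) {d : derivations a}
    (hd : derivations.restrict a X d ∈ innerDerivations (a.comp X.subtype)) :
    d ∈ innerDerivations a := by
  obtain ⟨v, hv⟩ := hd
  have hmem : d / innerHom a v ∈ vanishing a X := by
    refine mem_vanishing.2 fun x hx ↦ div_eq_one.2 ?_
    exact (DFunLike.congr_fun hv (⟨x, hx⟩ : X)).symm
  exact ⟨v, (div_eq_one.1 (eq_one_of_mem_vanishing hfix hmem)).symm⟩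

lemma mem_innerDerivations_of_coprime_index {d : derivations a} {N : Subgroup G} [N.FiniteIndex]
    (hN : N ≤ derivations.ker d) {n : ℕ} (hn : 1 < n) (hV : ∀ v : V, v ^ n = 1)
    (hcop : N.index.Coprime n) : d ∈ innerDerivations a := by
  obtain ⟨w, hw⟩ := exists_pow_index_eq_of_le_ker d hN
  obtain ⟨m, hm⟩ := Nat.exists_mul_mod_eq_one_of_coprime hcop hn
  refine ⟨(w ^ m)⁻¹, DFunLike.ext _ _ fun g ↦ ?_⟩
  calc innerHom a (w ^ m)⁻¹ g = (w * (a g w)⁻¹) ^ m := by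
        rw [innerHom_apply, map_inv, map_pow, inv_inv, mul_comm, mul_pow, inv_pow]
    _ = d g ^ (N.index * m) := by rw [← hw, pow_mul]
    _ = d g := by rw [pow_eq_pow_mod _ (hV _), hm.2, pow_one]

lemma IsChiefFactorPair.vanishing_le_innerDerivations [Finite G] [Finite V]
    (h : IsChiefFactorPair G X Y) (hcomm : ⁅X, X⁆ ≤ Y) (hI : IsIrreducibleGGroup G a)
    (hY : Y ≤ a.ker) (hX : ¬X ≤ a.ker) : vanishing a Y ≤ innerDerivations a := by
  intro d hd
  have := h.normal_left
  obtain ⟨p, hp, hpV, hpow⟩ := exists_prime_pow_eq_one hI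
  refine mem_innerDerivations_of_restrict (fixedBy_eq_bot hI hX) <|
    mem_innerDerivations_of_coprime_index (N := Y.subgroupOf X)
      (fun y hy ↦ mem_vanishing.1 hd y hy) hp.one_lt hpow ?_
  exact (hp.coprime_iff_not_dvd.2 (h.not_dvd_relIndex hcomm hI hY hX hp hpV)).symm

lemma ChiefSeries.exists_index_vanishing_le [Finite G] [Finite V] (S : ChiefSeries G)
    (hI : IsIrreducibleGGroup G a) (i : Fin (S.len + 1)) (hi : S.ser i ≤ a.ker) :
    ∃ F : Finset (Fin S.len), (vanishing a (S.ser i)).index ≤ endCard G a ^ F.card ∧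
      ∀ j ∈ F, j.castSucc < i ∧ IsComplementedFactor G (S.ser j.succ) (S.ser j.castSucc) ∧
        RepresentsFactor G a (S.ser j.succ) (S.ser j.castSucc) := by
  classical
  induction i using Fin.induction with
  | zero =>
    refine ⟨∅, ?_, by simp⟩
    have htop : vanishing a (S.ser 0) = ⊤ := by
      refine (Subgroup.eq_top_iff' _).2 fun d ↦ mem_vanishing.2 fun x hx ↦ ?_
      rw [S.bot_eq, Subgroup.mem_bot] at hx
      rw [hx, derivations.map_one]
    simp [htop]
  | succ i ih =>
    have hch := S.chief i
    have := hch.normal_left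
    obtain ⟨F, hF, hFi⟩ := ih (hch.lt.le.trans hi)
    by_cases hle : vanishing a (S.ser i.castSucc) ≤ vanishing a (S.ser i.succ)
    · have : Finite (derivations a) := .of_injective _ Subtype.val_injective
      exact ⟨F, (Subgroup.index_antitone hle).trans hF,
        fun j hj ↦ ⟨(hFi j hj).1.trans i.castSucc_lt_succ, (hFi j hj).2⟩⟩
    · obtain ⟨d, hdY, hdX⟩ := SetLike.not_le_iff_exists.1 hle
      have hgood := hch.complemented_and_represents hI hi hdY hdX
      have hiF : i ∉ F := fun hiF ↦ (hFi i hiF).1.ne rfl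
      refine ⟨insert i F, ?_, (Finset.forall_mem_insert _ _ _).2 ⟨⟨i.castSucc_lt_succ, hgood⟩,
        fun j hj ↦ ⟨(hFi j hj).1.trans i.castSucc_lt_succ, (hFi j hj).2⟩⟩⟩
      rw [Finset.card_insert_of_notMem hiF, pow_succ',
        ← Subgroup.relIndex_mul_index (vanishing_antitone a hch.lt.le)]
      exact Nat.mul_le_mul (relIndex_vanishing_le_endCard hi hgood.2) hF

lemma ChiefSeries.exists_not_le (S : ChiefSeries G) {N : Subgroup G} (hN : N ≠ ⊤) :
    ∃ i : Fin S.len, S.ser i.castSucc ≤ N ∧ ¬S.ser i.succ ≤ N := by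
  by_contra! hstep
  refine hN (top_le_iff.1 (S.top_eq ▸ ?_))
  induction Fin.last S.len using Fin.induction with
  | zero => exact S.bot_eq ▸ bot_le
  | succ i ih => exact hstep i ih

theorem index_innerDerivations_le [Finite G] [Group.IsSolvable G] [Finite V]
    (hI : IsIrreducibleGGroup G a) (hne : a.ker ≠ ⊤) (S : ChiefSeries G) :
    (innerDerivations a).index ≤ endCard G a ^ deltaIso a S := by
  have : Finite (derivations a) := .of_injective _ Subtype.val_injective
  obtain ⟨i, hY, hX⟩ := S.exists_not_le hne
  obtain ⟨F, hF, hgood⟩ := S.exists_index_vanishing_le hI _ hY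
  have hinner := (S.chief i).vanishing_le_innerDerivations (S.chief i).commutator_le hI hY hX
  have hFδ : F.card ≤ deltaIso a S := by
    rw [← Nat.card_eq_finsetCard]
    exact Nat.card_mono (Set.toFinite _) fun j hj ↦ (hgood j hj).2
  exact (Subgroup.index_antitone hinner).trans <| hF.trans <|
    Nat.pow_le_pow_right (one_le_two.trans (two_le_endCard hI)) hFδ

end FirstCohomology

section MaximalSubgroups

open scoped commutatorElement

variable {V : Type*} [CommGroup V] {a : G →* MulAut V} {M N : Subgroup G}

lemma exists_derivation_extending [N.Normal] (hMN : M ⊔ N = ⊤) {ψ : N →* V}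
    (hψ : ConjEquivariant a ψ) (hker : M.subgroupOf N ≤ ψ.ker) :
    ∃ d : derivations a, M ≤ derivations.ker d ∧ ∀ n : N, d n = ψ n := by
  have hexists (g : G) : ∃ n : N, (n : G)⁻¹ * g ∈ M := by
    obtain ⟨n, hn, m, hm, rfl⟩ :=
      Subgroup.mem_sup_of_normal_left.1 (sup_comm M N ▸ hMN ▸ Subgroup.mem_top g)
    exact ⟨⟨n, hn⟩, by simpa using hm⟩
  choose ν hν using hexists
  have hval {g : G} {n : N} (hn : (n : G)⁻¹ * g ∈ M) : ψ (ν g) = ψ n := by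
    refine (inv_mul_eq_one.1 ?_).symm
    rw [← map_inv, ← map_mul, ← MonoidHom.mem_ker]
    refine hker (Subgroup.mem_subgroupOf.2 ?_)
    simpa [mul_assoc] using mul_mem hn (inv_mem (hν g))
  refine ⟨⟨fun g ↦ ψ (ν g), fun g h ↦ ?_⟩,
    fun m hm ↦ (hval (n := 1) (by simpa using hm)).trans (map_one ψ),
    fun n ↦ hval (by simp [one_mem])⟩
  calc ψ (ν (g * h)) = ψ (MulAut.conjNormal g (ν h) * ν g) :=
        hval (by simpa [mul_assoc] using mul_mem (hν g) (hν h))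
    _ = ψ (ν g) * a g (ψ (ν h)) := by rw [map_mul, hψ, mul_comm]

lemma inf_normal_of_sup_eq_top [hN : N.Normal] (hMN : M ⊔ N = ⊤) (hcomm : ⁅N, N⁆ ≤ M) :
    (M ⊓ N).Normal := by
  refine ⟨fun x ⟨hxM, hxN⟩ g ↦ ⟨?_, hN.conj_mem x hxN g⟩⟩
  obtain ⟨m, hm, n, hn, rfl⟩ := Subgroup.mem_sup_of_normal_right.1 (hMN ▸ Subgroup.mem_top g)
  have hconj : n * x * n⁻¹ ∈ M := by
    rw [← inv_mul_cancel_right (n * x * n⁻¹) x]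
    simpa [commutatorElement_def, mul_assoc] using
      mul_mem (hcomm (Subgroup.commutator_mem_commutator hn hxN)) hxM
  simpa [mul_assoc] using mul_mem (mul_mem hm hconj) (inv_mem hm)

lemma GEquiv.exists_equivariant {W : Type*} [Group W] {b : G →* MulAut W}
    (h : GEquiv G b a) : ∃ φ : W ≃* V, ∀ g w, φ (b g w) = a g (φ w) := by
  obtain ⟨φ, Φ, hφ, hright⟩ := h
  refine ⟨φ, fun g w ↦ ?_⟩
  -- `Φ (inr g)` acts on `V` by conjugation as `g` does, since it differs from `inr g` by an
  -- element of the commutative group `V`.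
  have hconj : (SemidirectProduct.inl (b g w) : W ⋊[b] G) * SemidirectProduct.inr g =
      SemidirectProduct.inr g * SemidirectProduct.inl w := by
    ext <;> simp
  have hleft := congrArg (fun x ↦ (Φ x).left) hconj
  simp only [map_mul, hφ, SemidirectProduct.mul_left, SemidirectProduct.left_inl,
    SemidirectProduct.right_inl, map_one, MulAut.one_apply, hright,
    SemidirectProduct.right_inr] at hleft
  exact mul_left_cancel ((mul_comm _ _).trans hleft)

lemma exists_derivation_of_socle_equivariant [Nontrivial V] (hM : IsCoatom M)
    (hcomm : IsMulCommutative (socle (G ⧸ M.normalCore)))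
    {ψ : socle (G ⧸ M.normalCore) →* V} (hsurj : Function.Surjective ψ)
    (hψ : ∀ g s, ψ (socAct G (QuotientGroup.mk' M.normalCore) g s) = a g (ψ s)) :
    ∃ d : derivations a, M ≤ derivations.ker d ∧ Set.SurjOn d a.ker Set.univ := by
  let π := QuotientGroup.mk' M.normalCore
  let T := (socle (G ⧸ M.normalCore)).comap π
  let χ : T →* V := ψ.comp (π.subgroupComap _)
  have hχ : ConjEquivariant a χ := fun g t ↦ hψ g (π.subgroupComap _ t)
  have hχsurj : Function.Surjective χ := hsurj.comp <|
    π.subgroupComap_surjective_of_surjective _ (QuotientGroup.mk'_surjective _)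
  have hker {K : Subgroup G} (hK : K ≤ M.normalCore) : K.subgroupOf T ≤ χ.ker := fun t ht ↦ by
    have hone : π.subgroupComap (socle _) t = 1 :=
      Subtype.ext ((QuotientGroup.eq_one_iff (t : G)).2 (hK ht))
    rw [MonoidHom.mem_ker, MonoidHom.comp_apply, hone, map_one]
  have hTM : ¬T ≤ M := fun hle ↦ by
    have htriv := hker (Subgroup.normal_le_normalCore.2 hle)
    obtain ⟨v, hv⟩ := exists_ne (1 : V)
    obtain ⟨t, rfl⟩ := hχsurj v
    exact hv (htriv t.2)
  have hsup : M ⊔ T = ⊤ := hM.2 _ (left_lt_sup.2 hTM)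
  have hTT : ⁅T, T⁆ ≤ M := by
    refine le_trans ?_ M.normalCore_le
    rw [← QuotientGroup.ker_mk' M.normalCore, ← Subgroup.map_eq_bot_iff, Subgroup.map_commutator,
      Subgroup.map_comap_eq_self_of_surjective (QuotientGroup.mk'_surjective _),
      Subgroup.commutator_self_eq_bot_iff.2 hcomm]
  have := inf_normal_of_sup_eq_top hsup hTT
  have hMT : M.subgroupOf T ≤ χ.ker := by
    rw [← Subgroup.inf_subgroupOf_right]
    exact hker (Subgroup.normal_le_normalCore.2 inf_le_left)
  obtain ⟨d, hdM, hd⟩ := exists_derivation_extending hsup hχ hMT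
  refine ⟨d, hdM, fun v _ ↦ ?_⟩
  obtain ⟨t, rfl⟩ := hχsurj v
  exact ⟨t, hχ.le_ker hχsurj t.2, hd t⟩

lemma exists_derivation_of_gEquiv [Nontrivial V] (hM : IsCoatom M)
    (h : GEquiv G (socAct G (QuotientGroup.mk' M.normalCore)) a ∨
      GEquiv G (socAct G (QuotientGroup.mk' M.normalCore)) (prodAct G a)) :
    ∃ d : derivations a, M ≤ derivations.ker d ∧ Set.SurjOn d a.ker Set.univ := by
  have hcomm {U : Type _} [CommGroup U] (φ : socle (G ⧸ M.normalCore) ≃* U) :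
      IsMulCommutative (socle (G ⧸ M.normalCore)) :=
    .of_comm fun s t ↦ φ.injective (by rw [map_mul, map_mul, mul_comm])
  rcases h with h | h
  · obtain ⟨φ, hφ⟩ := h.exists_equivariant
    exact exists_derivation_of_socle_equivariant hM (hcomm φ) (ψ := φ.toMonoidHom) φ.surjective hφ
  · obtain ⟨φ, hφ⟩ := h.exists_equivariant
    exact exists_derivation_of_socle_equivariant hM (hcomm φ)
      (ψ := (MonoidHom.fst V V).comp φ.toMonoidHom) (Prod.fst_surjective.comp φ.surjective)
      fun g s ↦ congrArg Prod.fst (hφ g s)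

end MaximalSubgroups

section InnerLocus

lemma card_inter_mul_le_card [Finite G] {C : Subgroup G} {A B : Set G}
    (hA : ∀ c ∈ C, ∀ g ∈ A, c * g ∈ A) {m : ℕ}
    (hm : ∀ g ∈ A, Nat.card {c : C // ↑c * g ∈ B} * m ≤ Nat.card C) :
    Nat.card ↥(A ∩ B) * m ≤ Nat.card A := by
  have := Fintype.ofFinite A
  let e : C × ↥(A ∩ B) ≃ Σ g : A, {c : C // (c : G) * g ∈ B} :=
    { toFun x := ⟨⟨(x.1 : G)⁻¹ * x.2, hA _ (inv_mem x.1.2) _ x.2.2.1⟩, x.1, by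
        simpa using x.2.2.2⟩
      invFun y := ⟨y.2.1, ⟨y.2.1 * y.1, hA _ y.2.1.2 _ y.1.2, y.2.2⟩⟩
      left_inv x := by simp
      right_inv := by
        rintro ⟨⟨g, hg⟩, c, hc⟩
        simp only [Sigma.mk.injEq, inv_mul_cancel_left, true_and]
        congr! 1
        simp }
  refine Nat.le_of_mul_le_mul_left ?_ (Nat.card_pos (α := C))
  calc Nat.card C * (Nat.card ↥(A ∩ B) * m)
      = ∑ g : A, Nat.card {c : C // (c : G) * g ∈ B} * m := by
        rw [← mul_assoc, ← Nat.card_prod, Nat.card_congr e, Nat.card_sigma, Finset.sum_mul]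
    _ ≤ ∑ _g : A, Nat.card C := Finset.sum_le_sum fun g _ ↦ hm g g.2
    _ = Nat.card C * Nat.card A := by
        rw [Finset.sum_const, Finset.card_univ, smul_eq_mul, mul_comm,
          Nat.card_eq_fintype_card (α := A)]

variable {V : Type*} [CommGroup V] {a : G →* MulAut V}

/-- The set of the elements of `G` at which the derivation `d` agrees with some inner derivation.
It contains every conjugate of the kernel of `d` and, unlike that kernel, depends only on the
cohomology class of `d`. -/
def innerLocus (d : derivations a) : Set G := {g | d g ∈ (commutatorHom a g).range}

lemma mem_innerLocus_of_conj_mem_ker {d : derivations a} {g x : G}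
    (h : x * g * x⁻¹ ∈ derivations.ker d) : g ∈ innerLocus d := by
  have hconj : d (g * x⁻¹) = d x⁻¹ := by
    calc d (g * x⁻¹) = d (x⁻¹ * (x * g * x⁻¹)) := by group
      _ = d x⁻¹ := by rw [derivations.map_mul, derivations.mem_ker.1 h, map_one, mul_one]
  refine ⟨(d x⁻¹)⁻¹, ?_⟩
  rw [commutatorHom_apply, inv_inv, map_inv, mul_comm]
  exact (eq_mul_inv_of_mul_eq (derivations.map_mul d g x⁻¹ ▸ hconj)).symm

lemma innerLocus_mul_innerHom (d : derivations a) (v : V) :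
    innerLocus (d * innerHom a v) = innerLocus d := by
  ext g
  exact (commutatorHom a g).range.mul_mem_cancel_right ⟨v, rfl⟩

lemma commutatorHom_mul_of_mem_ker {c : G} (hc : c ∈ a.ker) (g : G) :
    commutatorHom a (c * g) = commutatorHom a g := by
  ext v
  simp [MonoidHom.mem_ker.1 hc]

lemma card_mul_mem_innerLocus_le [Finite G] [Finite V] {d : derivations a}
    (hd : Set.SurjOn d a.ker Set.univ) (g : G) :
    Nat.card {c : a.ker // ↑c * g ∈ innerLocus d} * Nat.card (commutatorHom a g).ker ≤
      Nat.card a.ker := by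
  let R := (commutatorHom a g).range
  let φ : a.ker →* V ⧸ R := (QuotientGroup.mk' R).comp (derivations.restrictHom le_rfl d)
  have hφ : Function.Surjective φ := (QuotientGroup.mk'_surjective R).comp fun v ↦ by
    obtain ⟨c, hc, rfl⟩ := hd (Set.mem_univ v)
    exact ⟨⟨c, hc⟩, rfl⟩
  have hmem (c : a.ker) : ↑c * g ∈ innerLocus d ↔ φ c = (QuotientGroup.mk (d g))⁻¹ := by
    rw [eq_inv_iff_mul_eq_one, innerLocus, Set.mem_ofPred_eq, commutatorHom_mul_of_mem_ker c.2,
      derivations.map_mul_of_mem_ker c.2]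
    exact (QuotientGroup.eq_one_iff _).symm
  have hfiber : Nat.card {c : a.ker // ↑c * g ∈ innerLocus d} = Nat.card φ.ker := by
    rw [Nat.card_congr (Equiv.subtypeEquivRight hmem)]
    exact Nat.card_congr (MonoidHom.fiberEquivKerOfSurjective hφ _)
  rw [hfiber, ← Subgroup.index_range, ← φ.ker.card_mul_index, Subgroup.index_ker,
    MonoidHom.range_eq_top.2 hφ, Subgroup.card_top, Subgroup.index]

lemma SatisfyVProperty.exists_innerLocus [Nontrivial V] {k : ℕ} {gs : Fin k → G}
    (h : SatisfyVProperty a gs) :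
    ∃ d : derivations a, Set.SurjOn d a.ker Set.univ ∧ ∀ i, gs i ∈ innerLocus d := by
  obtain ⟨M, hM, hsoc, hgs⟩ := h
  obtain ⟨d, hdM, hd⟩ := exists_derivation_of_gEquiv hM hsoc
  refine ⟨d, hd, fun i ↦ ?_⟩
  obtain ⟨x, hx⟩ := hgs i
  exact mem_innerLocus_of_conj_mem_ker (hdM hx)

variable (a) in
/-- The cohomology classes of derivations (elements of `derivations a ⧸ innerDerivations a`)
represented by a derivation that maps `a.ker` onto `V`. The condition does not depend on the
representative, and the chosen one is `Quotient.out`. -/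
abbrev SurjectiveClass : Type _ :=
  {t : derivations a ⧸ innerDerivations a // Set.SurjOn t.out a.ker Set.univ}

lemma exists_surjectiveClass {d : derivations a} (hd : Set.SurjOn d a.ker Set.univ) :
    ∃ t : SurjectiveClass a, innerLocus t.1.out = innerLocus d := by
  obtain ⟨⟨_, v, rfl⟩, hout⟩ := QuotientGroup.mk_out_eq_mul (innerDerivations a) d
  refine ⟨⟨d, ?_⟩, hout ▸ innerLocus_mul_innerHom d v⟩
  rw [hout]
  refine hd.congr fun c hc ↦ ?_
  simp [MonoidHom.mem_ker.1 hc]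

end InnerLocus

section Bounds

variable {V : Type*} [CommGroup V] {a : G →* MulAut V}

lemma tsum_pStar_le_of_le_card_ker [Finite G] [Group.IsSolvable G] [Finite V]
    (hI : IsIrreducibleGGroup G a) (hne : a.ker ≠ ⊤) (S : ChiefSeries G) {A : Set G}
    (hA : A.Nonempty) (hkerA : ∀ c ∈ a.ker, ∀ g ∈ A, c * g ∈ A) {m : ℕ} (hm : 2 ≤ m)
    (hmA : ∀ g ∈ A, m ≤ Nat.card (commutatorHom a g).ker) {N : ℕ}
    (hN : endCard G a ^ deltaIso a S ≤ m ^ N) :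
    ∑' k, pStar a k ≤ (N + (m : ℝ) / (m - 1)) * (Nat.card G / Nat.card A) := by
  have := hI.1
  have : Finite (derivations a) := .of_injective _ Subtype.val_injective
  have hm₀ : (2 : ℝ) ≤ m := by exact_mod_cast hm
  have hinv : (m : ℝ) / (m - 1) = (1 - (m : ℝ)⁻¹)⁻¹ := by
    have : (m : ℝ) - 1 ≠ 0 := by linarith
    field_simp
  have hclasses : Nat.card (SurjectiveClass a) ≤ m ^ N :=
    (Finite.card_subtype_le _).trans ((index_innerDerivations_le hI hne S).trans hN)
  rw [hinv]
  refine tsum_card_div_pow_le hA (B := fun t : SurjectiveClass a ↦ innerLocus t.1.out)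
    (by positivity) (inv_lt_one_of_one_lt₀ (by linarith)) (fun t ↦ ?_) ?_
    (E := fun k ↦ {gs | SatisfyVProperty a gs}) fun k gs hgs ↦ ?_
  · rw [le_inv_mul_iff₀ (by linarith), mul_comm]
    exact_mod_cast card_inter_mul_le_card hkerA fun g hg ↦
      (Nat.mul_le_mul_left _ (hmA g hg)).trans (card_mul_mem_innerLocus_le t.2 g)
  · rw [inv_pow, mul_inv_le_iff₀ (by positivity), one_mul]
    exact_mod_cast hclasses
  · obtain ⟨d, hd, hgd⟩ := SatisfyVProperty.exists_innerLocus hgs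
    obtain ⟨t, ht⟩ := exists_surjectiveClass hd
    exact ⟨t, fun i ↦ ht ▸ hgd i⟩

variable (a) in
/-- The set of the elements of `G` that fix a non-trivial element of `V`. -/
def fixingSet : Set G := {g | ∃ v ≠ 1, a g v = v}

lemma card_le_card_mul_card_fixingSet [Finite G] [Finite V] [Nontrivial V] :
    Nat.card G ≤ Nat.card V * Nat.card (fixingSet a) := by
  obtain ⟨v, hv⟩ := exists_ne (1 : V)
  let _ : MulAction G V := .compHom V a
  rw [← (MulAction.stabilizer G v).index_mul_card, MulAction.index_stabilizer]
  exact Nat.mul_le_mul (Set.ncard_le_card _)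
    (Nat.card_mono (Set.toFinite _) fun g (hg : a g v = v) ↦ ⟨v, hv, hg⟩)

lemma tsum_pStar_le_mul_card [Finite G] [Group.IsSolvable G] [Finite V]
    (hI : IsIrreducibleGGroup G a) (hne : a.ker ≠ ⊤) (S : ChiefSeries G) :
    ∑' k, pStar a k ≤
      (deltaIso a S + (endCard G a : ℝ) / (endCard G a - 1)) * Nat.card V := by
  have := hI.1
  have hq : (2 : ℝ) ≤ endCard G a := by exact_mod_cast two_le_endCard hI
  have hA : (fixingSet a).Nonempty := by
    obtain ⟨v, hv⟩ := exists_ne (1 : V)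
    exact ⟨1, v, hv, by simp⟩
  have : Nonempty (fixingSet a) := hA.to_subtype
  refine (tsum_pStar_le_of_le_card_ker hI hne S hA ?_ (two_le_endCard hI)
    (fun g ⟨v, hv, hgv⟩ ↦ endCard_le_card_ker_commutatorHom hI hv hgv) le_rfl).trans ?_
  · rintro c hc g ⟨v, hv, hgv⟩
    exact ⟨v, hv, by rw [map_mul, MonoidHom.mem_ker.1 hc, one_mul, hgv]⟩
  · have : 0 ≤ (endCard G a : ℝ) / (endCard G a - 1) := div_nonneg (by linarith) (by linarith)
    gcongr
    rw [div_le_iff₀ (by exact_mod_cast Nat.card_pos)]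
    exact_mod_cast card_le_card_mul_card_fixingSet

lemma tsum_pStar_le_mul_card_quotient_ker [Finite G] [Group.IsSolvable G] [Finite V]
    (hI : IsIrreducibleGGroup G a) (hne : a.ker ≠ ⊤) (S : ChiefSeries G) :
    ∑' k, pStar a k ≤
      (⌈(deltaIso a S : ℝ) / dimEnd G a⌉₊ + (Nat.card V : ℝ) / (Nat.card V - 1)) *
        Nat.card (G ⧸ a.ker) := by
  have := hI.1
  have hdim : 0 < dimEnd G a := Nat.pos_of_ne_zero fun h ↦ by
    have := endCard_pow_dimEnd hI
    rw [h, pow_zero] at this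
    exact (Finite.one_lt_card (α := V)).ne this
  have hN : endCard G a ^ deltaIso a S ≤
      Nat.card V ^ ⌈(deltaIso a S : ℝ) / dimEnd G a⌉₊ := by
    rw [← endCard_pow_dimEnd hI, ← pow_mul]
    refine Nat.pow_le_pow_right (one_le_two.trans (two_le_endCard hI)) ?_
    have := Nat.le_ceil ((deltaIso a S : ℝ) / dimEnd G a)
    rw [div_le_iff₀' (by exact_mod_cast hdim)] at this
    exact_mod_cast this
  have hcard : (Nat.card G : ℝ) / Nat.card (a.ker : Set G) = Nat.card (G ⧸ a.ker) := by
    rw [a.ker.card_eq_card_quotient_mul_card_subgroup, Nat.cast_mul]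
    exact mul_div_cancel_right₀ _ (by exact_mod_cast Nat.card_pos.ne')
  rw [← hcard]
  refine tsum_pStar_le_of_le_card_ker hI hne S (OneMemClass.coe_nonempty a.ker)
    (fun c hc g hg ↦ mul_mem hc hg) Finite.one_lt_card (fun g hg ↦ ?_) hN
  have htriv : commutatorHom a g = 1 := by
    ext v
    simp [MonoidHom.mem_ker.1 hg]
  rw [htriv, MonoidHom.ker_one, Subgroup.card_top]

theorem pStar_tsum_le_general [Finite G] [Group.IsSolvable G] [Finite V]
    (hI : IsIrreducibleGGroup G a) (hne : a.ker ≠ ⊤) (S : ChiefSeries G) :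
    (∑' k : ℕ, pStar a k) ≤
      min
        (((deltaIso a S : ℝ) + (endCard G a : ℝ) / ((endCard G a : ℝ) - 1)) *
          (endCard G a : ℝ) ^ dimEnd G a)
        ((((⌈((deltaIso a S : ℝ) / (dimEnd G a : ℝ))⌉ : ℤ) : ℝ) +
            (endCard G a : ℝ) ^ dimEnd G a / ((endCard G a : ℝ) ^ dimEnd G a - 1)) *
          (Nat.card (G ⧸ a.ker) : ℝ)) := by
  rw [← Nat.cast_pow, endCard_pow_dimEnd hI, ← natCast_ceil_eq_intCast_ceil (by positivity)]
  exact le_min (tsum_pStar_le_mul_card hI hne S) (tsum_pStar_le_mul_card_quotient_ker hI hne S)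

end Bounds

namespace RepresentsFactor

variable {V : Type*} [Group V] {a : G →* MulAut V} {X Y : Subgroup G}

lemma finite [Finite G] (h : RepresentsFactor G a X Y) : Finite V :=
  let ⟨f, hf, _⟩ := h
  .of_surjective f hf

lemma mul_comm (h : RepresentsFactor G a X Y) (hcomm : ⁅X, X⁆ ≤ Y) (v w : V) :
    v * w = w * v := by
  obtain ⟨f, hf, hfY, -⟩ := h
  obtain ⟨x, rfl⟩ := hf v
  obtain ⟨y, rfl⟩ := hf w
  rw [← commutatorElement_eq_one_iff_mul_comm, ← map_commutatorElement, hfY]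
  exact hcomm (Subgroup.commutator_mem_commutator x.2 y.2)

lemma isIrreducibleGGroup (h : RepresentsFactor G a X Y) (hch : IsChiefFactorPair G X Y) :
    IsIrreducibleGGroup G a := by
  have := hch.normal_left
  obtain ⟨f, hsurj, hker, hf⟩ := representsFactor_iff.1 h
  refine ⟨?_, fun W _ hW ↦ ?_⟩
  · obtain ⟨x, hx, hxY⟩ := SetLike.exists_of_lt hch.lt
    exact ⟨f ⟨x, hx⟩, 1, fun hone ↦ hxY (Subgroup.mem_subgroupOf.1 (hker.le hone))⟩
  have hY : Y ≤ (W.comap f).map X.subtype := by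
    rw [← Subgroup.map_subgroupOf_eq_of_le hch.lt.le, ← hker]
    exact Subgroup.map_mono (f.ker_le_comap W)
  have hmap {K : Subgroup X} (hK : (W.comap f).map X.subtype = K.map X.subtype) :
      W = K.map f := by
    rw [← Subgroup.map_injective X.subtype_injective hK,
      Subgroup.map_comap_eq_self_of_surjective hsurj]
  have hnormal := ConjEquivariant.normal_map_comap hf hW
  rcases hch.2.2.2 _ hnormal hY (Subgroup.map_subtype_le _) with hbot | htop
  · left
    rw [hmap (hbot.trans (Subgroup.map_subgroupOf_eq_of_le hch.lt.le).symm), ← hker]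
    exact Subgroup.map_ker_self f
  · right
    rw [hmap (K := ⊤) (by rw [htop, ← MonoidHom.range_eq_map, Subgroup.range_subtype])]
    exact Subgroup.map_top_of_surjective f hsurj

lemma ker_ne_top [X.Normal] (h : RepresentsFactor G a X Y) (hnc : ¬IsCentralFactor G X Y) :
    a.ker ≠ ⊤ := by
  obtain ⟨f, -, hfY, hf⟩ := h
  refine fun htop ↦ hnc fun g x hx ↦ ?_
  have hg : a g = 1 := htop.ge (Subgroup.mem_top g)
  have hfg := hf g ⟨x, hx⟩ _ (MulAut.conjNormal_apply g _)
  rw [hg, MulAut.one_apply] at hfg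
  refine (hfY (MulAut.conjNormal g ⟨x, hx⟩ * ⟨x, hx⟩⁻¹)).1 ?_
  rw [map_mul, map_inv, hfg, mul_inv_cancel]

end RepresentsFactor

/-- The inequality (3.6) in the proof of Theorem 2: for a non-central complemented chief
factor `V` of a finite soluble group `G`,
`Σ_{k≥0} P*_{G,V}(k) ≤ min{(δ_V + q_V/(q_V-1))·q_V^{n_V},
                            (⌈δ_V/n_V⌉ + q_V^{n_V}/(q_V^{n_V}-1))·|H_V|}`. -/
theorem pStar_tsum_le (G : Type) [Group G] [Finite G] (hsol : IsSolvable G)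
    (V : Type) [Group V] (a : G →* MulAut V) (X Y : Subgroup G)
    (hchief : IsChiefFactorPair G X Y)
    (hcomp : IsComplementedFactor G X Y) (hnc : ¬ IsCentralFactor G X Y)
    (hrep : RepresentsFactor G a X Y)
    (S : ChiefSeries G) :
    (∑' k : ℕ, pStar a k) ≤
      min
        (((deltaIso a S : ℝ) + (endCard G a : ℝ) / ((endCard G a : ℝ) - 1)) *
          (endCard G a : ℝ) ^ dimEnd G a)
        ((((⌈((deltaIso a S : ℝ) / (dimEnd G a : ℝ))⌉ : ℤ) : ℝ) +
            (endCard G a : ℝ) ^ dimEnd G a / ((endCard G a : ℝ) ^ dimEnd G a - 1)) *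
          (Nat.card (G ⧸ a.ker) : ℝ)) := by
  have : Group.IsSolvable G := hsol
  have := hchief.normal_left
  have := hrep.finite
  let _ : CommGroup V := { ‹Group V› with mul_comm := hrep.mul_comm hchief.commutator_le }
  exact pStar_tsum_le_general (hrep.isIrreducibleGGroup hchief) (hrep.ker_ne_top hnc) S

end ChebotarevPaper
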